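/- arXiv:2006.06927 — 2 statements merged into one kernel-verified Lean document; each statement's English description precedes it below -/
import Mathlib

section
/- Let 1 < p, q, r < ∞ with 1/p + 1/q = 1/r. Let f, h : ℝ → ℝ with g∘f and g∘h measurable, and suppose ∫_ℝ |g(f(x))|^p·g'(x) dx < ∞ and ∫_ℝ |g(h(x))|^q·g'(x) dx < ∞. Then ∫_ℝ |g(f(x))·g(h(x))|^r·g'(x) dx < ∞ and the generalized pseudo-Hölder inequality holds: [f ⊗ h]_r ≤_g [f]_p ⊗ [h]_q; equivalently, (∫_ℝ |g(f(x))·g(h(x))|^r·g'(x) dx)^{1/r} ≤ (∫_ℝ |g(f(x))|^p·g'(x) dx)^{1/p}·(∫_ℝ |g(h(x))|^q·g'(x) dx)^{1/q}. -/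
open MeasureTheory

noncomputable section

/-- pseudo-multiplication: `x ⊗ y = g⁻¹(g x * g y)` -/
def pmul (g ginv : ℝ → ℝ) (x y : ℝ) : ℝ := ginv (g x * g y)

/-- pseudo-order for an increasing generator: `x ≤_g y ↔ g x ≤ g y` -/
def pleInc (g : ℝ → ℝ) (x y : ℝ) : Prop := g x ≤ g y

/-- pseudo `r`-functional: `[f]_r = g⁻¹((∫ |g (f x)|^r g'(x) dx)^(1/r))` -/
def pfunc (g ginv g' : ℝ → ℝ) (f : ℝ → ℝ) (r : ℝ) : ℝ :=
  ginv ((∫ x, |g (f x)| ^ r * g' x) ^ (1 / r))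

/-!
The exponents `p / r` and `q / r` are Hölder conjugate, so the classical Hölder inequality applied
to `‖u‖ ^ r` and `‖v‖ ^ r` gives the inequality for the triple `(p, q, r)` over any measure. Since
`g` is monotone, `g' ≥ 0`, so `g' x dx` is such a measure, and applying `g` to both sides of the
pseudo-inequality turns it into this inequality for `g ∘ f` and `g ∘ h`.
-/

section Holder

variable {α : Type*} [MeasurableSpace α] {μ : Measure α}

lemma memLp_norm_rpow_div_of_integrable_norm_rpow {E : Type*} [SeminormedAddGroup E] {u : α → E}
    {p r : ℝ} (hp : 0 < p) (hr : 0 < r) (hu : Integrable (fun x => ‖u x‖ ^ p) μ) :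
    MemLp (fun x => ‖u x‖ ^ r) (ENNReal.ofReal (p / r)) μ := by
  have hrp : 0 < r / p := div_pos hr hp
  have hpow (x : α) : ‖‖u x‖ ^ p‖ ^ (r / p) = ‖u x‖ ^ r := by
    rw [Real.norm_of_nonneg (by positivity), ← Real.rpow_mul (norm_nonneg _),
      mul_div_cancel₀ _ hp.ne']
  have hexp : ENNReal.ofReal (p / r) = 1 / ENNReal.ofReal (r / p) := by
    rw [one_div, ← ENNReal.ofReal_inv_of_pos hrp, inv_div]
  simpa only [hexp, hpow, ENNReal.toReal_ofReal hrp.le] using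
    -- Integrability of `‖u‖ ^ p` makes `‖u‖` a.e. measurable even when `u` is not.
    (memLp_one_iff_integrable.2 hu).norm_rpow_div (ENNReal.ofReal (r / p))

variable {R : Type*} [NonUnitalSeminormedRing R] [NormMulClass R] {u v : α → R} {p q r : ℝ}

lemma integrable_norm_mul_rpow (hpqr : p.HolderTriple q r)
    (hu : Integrable (fun x => ‖u x‖ ^ p) μ) (hv : Integrable (fun x => ‖v x‖ ^ q) μ) :
    Integrable (fun x => ‖u x * v x‖ ^ r) μ := by
  have hr : 0 < r := hpqr.pos'
  have : (ENNReal.ofReal (p / r)).HolderConjugate (ENNReal.ofReal (q / r)) :=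
    hpqr.holderConjugate_div_div.ennrealOfReal
  simpa only [norm_mul, Real.mul_rpow (norm_nonneg _) (norm_nonneg _)] using!
    (memLp_norm_rpow_div_of_integrable_norm_rpow hpqr.pos hr hu).integrable_mul
      (memLp_norm_rpow_div_of_integrable_norm_rpow hpqr.symm.pos hr hv)

lemma integral_norm_mul_rpow_le (hpqr : p.HolderTriple q r)
    (hu : Integrable (fun x => ‖u x‖ ^ p) μ) (hv : Integrable (fun x => ‖v x‖ ^ q) μ) :
    ∫ x, ‖u x * v x‖ ^ r ∂μ ≤
      (∫ x, ‖u x‖ ^ p ∂μ) ^ (r / p) * (∫ x, ‖v x‖ ^ q ∂μ) ^ (r / q) := by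
  have hr : 0 < r := hpqr.pos'
  have hpow (a : R) (s : ℝ) : (‖a‖ ^ r) ^ (s / r) = ‖a‖ ^ s := by
    rw [← Real.rpow_mul (norm_nonneg a), mul_div_cancel₀ s hr.ne']
  have holder := integral_mul_le_Lp_mul_Lq_of_nonneg hpqr.holderConjugate_div_div
    (.of_forall fun x => by positivity) (.of_forall fun x => by positivity)
    (memLp_norm_rpow_div_of_integrable_norm_rpow hpqr.pos hr hu)
    (memLp_norm_rpow_div_of_integrable_norm_rpow hpqr.symm.pos hr hv)
  simpa only [norm_mul, Real.mul_rpow (norm_nonneg _) (norm_nonneg _), hpow, one_div_div]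
    using holder

lemma rpow_integral_norm_mul_rpow_le (hpqr : p.HolderTriple q r)
    (hu : Integrable (fun x => ‖u x‖ ^ p) μ) (hv : Integrable (fun x => ‖v x‖ ^ q) μ) :
    (∫ x, ‖u x * v x‖ ^ r ∂μ) ^ (1 / r) ≤
      (∫ x, ‖u x‖ ^ p ∂μ) ^ (1 / p) * (∫ x, ‖v x‖ ^ q ∂μ) ^ (1 / q) := by
  have hr : 0 < r := hpqr.pos'
  have hroot {a : ℝ} (ha : 0 ≤ a) (s : ℝ) : (a ^ (r / s)) ^ (1 / r) = a ^ (1 / s) := by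
    rw [← Real.rpow_mul ha, mul_one_div, div_div_cancel_left' hr.ne', one_div]
  calc (∫ x, ‖u x * v x‖ ^ r ∂μ) ^ (1 / r)
      ≤ ((∫ x, ‖u x‖ ^ p ∂μ) ^ (r / p) * (∫ x, ‖v x‖ ^ q ∂μ) ^ (r / q)) ^ (1 / r) := by
        gcongr
        exact integral_norm_mul_rpow_le hpqr hu hv
    _ = (∫ x, ‖u x‖ ^ p ∂μ) ^ (1 / p) * (∫ x, ‖v x‖ ^ q ∂μ) ^ (1 / q) := by
        rw [Real.mul_rpow (by positivity) (by positivity), hroot (by positivity),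
          hroot (by positivity)]

end Holder

section Density

variable {α : Type*} [MeasurableSpace α] {μ : Measure α} {w : α → ℝ}

lemma integrable_withDensity_ofReal_iff (hw : AEMeasurable w μ) (hw0 : 0 ≤ᵐ[μ] w) (φ : α → ℝ) :
    Integrable φ (μ.withDensity fun x => ENNReal.ofReal (w x)) ↔
      Integrable (fun x => φ x * w x) μ := by
  rw [integrable_withDensity_iff_integrable_smul₀' hw.ennreal_ofReal (by simp)]
  refine integrable_congr ?_
  filter_upwards [hw0] with x hx
  rw [ENNReal.toReal_ofReal hx, smul_eq_mul, mul_comm]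

lemma integral_withDensity_ofReal (hw : AEMeasurable w μ) (hw0 : 0 ≤ᵐ[μ] w) (φ : α → ℝ) :
    ∫ x, φ x ∂(μ.withDensity fun x => ENNReal.ofReal (w x)) = ∫ x, φ x * w x ∂μ := by
  rw [integral_withDensity_eq_integral_toReal_smul₀ hw.ennreal_ofReal (by simp)]
  refine integral_congr_ae ?_
  filter_upwards [hw0] with x hx
  rw [ENNReal.toReal_ofReal hx, smul_eq_mul, mul_comm]

end Density

section Generator

variable {g ginv : ℝ → ℝ}

lemma apply_pmul (hri : Function.RightInverse ginv g) (x y : ℝ) :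
    g (pmul g ginv x y) = g x * g y :=
  hri _

lemma apply_pfunc (hri : Function.RightInverse ginv g) (g' f : ℝ → ℝ) (r : ℝ) :
    g (pfunc g ginv g' f r) = (∫ x, |g (f x)| ^ r * g' x) ^ (1 / r) :=
  hri _

end Generator

theorem pseudo_holder_general_general {g ginv g' : ℝ → ℝ} (hmono : Monotone g)
    (hderiv : ∀ x, HasDerivAt g (g' x) x) (hri : Function.RightInverse ginv g)
    {p q r : ℝ} (hpqr : p.HolderTriple q r) {f h : ℝ → ℝ}
    (hfi : Integrable (fun x => |g (f x)| ^ p * g' x))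
    (hhi : Integrable (fun x => |g (h x)| ^ q * g' x)) :
    Integrable (fun x => |g (f x) * g (h x)| ^ r * g' x) ∧
      pleInc g (pfunc g ginv g' (fun x => pmul g ginv (f x) (h x)) r)
        (pmul g ginv (pfunc g ginv g' f p) (pfunc g ginv g' h q)) := by
  obtain rfl : deriv g = g' := funext fun x => (hderiv x).deriv
  have hmeas : AEMeasurable (deriv g) := (measurable_deriv g).aemeasurable
  have hnonneg : 0 ≤ᵐ[volume] deriv g := .of_forall fun _ => hmono.deriv_nonneg
  simp only [pleInc, apply_pmul hri, apply_pfunc hri]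
  simp only [← Real.norm_eq_abs, ← integral_withDensity_ofReal hmeas hnonneg,
    ← integrable_withDensity_ofReal_iff hmeas hnonneg] at hfi hhi ⊢
  exact ⟨integrable_norm_mul_rpow hpqr hfi hhi, rpow_integral_norm_mul_rpow_le hpqr hfi hhi⟩

/-- Generalized pseudo-Hölder inequality for an increasing generator,
`1 < p, q, r < ∞`, `1/p + 1/q = 1/r`: `[f ⊗ h]_r ≤_g [f]_p ⊗ [h]_q`. -/
theorem pseudo_holder_general (g ginv g' : ℝ → ℝ)
    (hmono : StrictMono g) (hderiv : ∀ x, HasDerivAt g (g' x) x)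
    (hli : Function.LeftInverse ginv g) (hri : Function.RightInverse ginv g)
    (p q r : ℝ) (hp : 1 < p) (hq : 1 < q) (hr : 1 < r)
    (hpqr : 1 / p + 1 / q = 1 / r)
    (f h : ℝ → ℝ) (hf : Measurable (g ∘ f)) (hh : Measurable (g ∘ h))
    (hfi : Integrable (fun x => |g (f x)| ^ p * g' x))
    (hhi : Integrable (fun x => |g (h x)| ^ q * g' x)) :
    Integrable (fun x => |g (f x) * g (h x)| ^ r * g' x) ∧
      pleInc g (pfunc g ginv g' (fun x => pmul g ginv (f x) (h x)) r)
        (pmul g ginv (pfunc g ginv g' f p) (pfunc g ginv g' h q)) :=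
  pseudo_holder_general_general hmono.monotone hderiv hri
    ⟨by simpa only [one_div] using hpqr, by positivity, by positivity⟩ hfi hhi
end
end

section
/- Let a < b, let f : [a,b] → ℝ be pseudo-convex on [a,b] with g∘f integrable on [a,b], and let 0 ≤ λ ≤ 1. Define ℓ(λ) := λ ⊙ f((λb + (2−λ)a)/2) ⊕ (1−λ) ⊙ f(((1+λ)b + (1−λ)a)/2). Then f((a+b)/2) ≤_g ℓ(λ) ≤_g (1/(b−a)) ⊙ ∫^⊕_{[a,b]} f(x) ⊗ dx; equivalently, g(f((a+b)/2)) ≤ λ·g(f((λb+(2−λ)a)/2)) + (1−λ)·g(f(((1+λ)b+(1−λ)a)/2)) ≤ (1/(b−a))·∫_a^b g(f(x)) dx. -/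
open MeasureTheory intervalIntegral

noncomputable section

/-- pseudo-addition: `x ⊕ y = g⁻¹(g x + g y)` -/
def padd (g ginv : ℝ → ℝ) (x y : ℝ) : ℝ := ginv (g x + g y)

/-- pseudo-scalar multiplication: `l ⊙ x = g⁻¹(l * g x)` -/
def psmul (g ginv : ℝ → ℝ) (l x : ℝ) : ℝ := ginv (l * g x)

/-- pseudo-integral: `∫^⊕_{[a,b]} f(x) ⊗ dx = g⁻¹(∫_a^b g (f x) dx)` -/
def pint (g ginv : ℝ → ℝ) (f : ℝ → ℝ) (a b : ℝ) : ℝ :=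
  ginv (∫ x in a..b, g (f x))

/-- pseudo-convexity of `f` on `[a,b]` -/
def PseudoConvexOn (g ginv : ℝ → ℝ) (a b : ℝ) (f : ℝ → ℝ) : Prop :=
  ∀ x ∈ Set.Icc a b, ∀ y ∈ Set.Icc a b, ∀ l ∈ Set.Icc (0 : ℝ) 1,
    pleInc g (f (l * x + (1 - l) * y))
      (padd g ginv (psmul g ginv l (f x)) (psmul g ginv (1 - l) (f y)))

/-!
Pseudo-convexity of `f` is convexity of `g ∘ f`, and `g` turns the pseudo-operations into the
ordinary ones, so everything is about a convex function `h` on `[a, b]`. Cut `[a, b]` at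
`m = l * b + (1 - l) * a`. The two arguments of `h` in `ℓ(l)` are the midpoints of the pieces, and
their convex combination with weights `l` and `1 - l` is the midpoint of `[a, b]`: convexity gives
the first inequality. The second one is the midpoint inequality `(d - c) * h ((c + d) / 2) ≤ ∫ h` on
each piece, obtained by averaging `h` with its reflection.
-/

/-- The paper's `ℓ(l)` for the ordinary operations: the values of `h` at the midpoints of the two
pieces of `[a, b]` cut at `l * b + (1 - l) * a`, weighted by their relative lengths. -/
def splitMidpointMean (h : ℝ → ℝ) (a b l : ℝ) : ℝ :=
  l * h ((l * b + (2 - l) * a) / 2) + (1 - l) * h (((1 + l) * b + (1 - l) * a) / 2)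

section ConvexOn

variable {h : ℝ → ℝ} {a b : ℝ}

theorem two_mul_map_midpoint_le_of_convexOn (hh : ConvexOn ℝ (Set.Icc a b) h) {x : ℝ}
    (hx : x ∈ Set.Icc a b) : 2 * h ((a + b) / 2) ≤ h x + h (a + b - x) := by
  have hx' : a + b - x ∈ Set.Icc a b := ⟨by linarith [hx.2], by linarith [hx.1]⟩
  have hmid : (1 / 2 : ℝ) • x + (1 / 2 : ℝ) • (a + b - x) = (a + b) / 2 := by
    simp only [smul_eq_mul]
    ring
  have hle := hh.2 hx hx' one_half_pos.le one_half_pos.le (add_halves 1)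
  rw [hmid, smul_eq_mul, smul_eq_mul] at hle
  linarith

theorem exists_forall_abs_le_of_convexOn_Icc (hh : ConvexOn ℝ (Set.Icc a b) h) :
    ∃ C, ∀ x ∈ Set.Icc a b, |h x| ≤ C := by
  have upper {x : ℝ} (hx : x ∈ Set.Icc a b) : h x ≤ max (h a) (h b) :=
    have hab : a ≤ b := hx.1.trans hx.2
    hh.le_max_of_mem_Icc (Set.left_mem_Icc.2 hab) (Set.right_mem_Icc.2 hab) hx
  have lower {x : ℝ} (hx : x ∈ Set.Icc a b) :
      2 * h ((a + b) / 2) - max (h a) (h b) ≤ h x := by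
    have hx' : a + b - x ∈ Set.Icc a b := ⟨by linarith [hx.2], by linarith [hx.1]⟩
    linarith [two_mul_map_midpoint_le_of_convexOn hh hx, upper hx']
  exact ⟨_, fun x hx => abs_le_max_abs_abs (lower hx) (upper hx)⟩

theorem intervalIntegrable_of_convexOn {μ : Measure ℝ} [IsLocallyFiniteMeasure μ]
    [NullSingletonClass μ] (hab : a ≤ b) (hh : ConvexOn ℝ (Set.Icc a b) h) :
    IntervalIntegrable h μ a b := by
  obtain ⟨C, hC⟩ := exists_forall_abs_le_of_convexOn_Icc hh
  have hcont : ContinuousOn h (Set.Ioo a b) := by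
    simpa only [interior_Icc] using hh.continuousOn_interior
  rw [intervalIntegrable_iff_integrableOn_Ioo_of_le hab]
  exact .of_bound measure_Ioo_lt_top (hcont.aestronglyMeasurable measurableSet_Ioo) C <|
    ae_restrict_of_forall_mem measurableSet_Ioo fun x hx => hC x (Set.Ioo_subset_Icc_self hx)

theorem sub_mul_map_midpoint_le_integral_of_convexOn (hab : a ≤ b)
    (hh : ConvexOn ℝ (Set.Icc a b) h) : (b - a) * h ((a + b) / 2) ≤ ∫ x in a..b, h x := by
  have hint : IntervalIntegrable h volume a b := intervalIntegrable_of_convexOn hab hh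
  have hint_refl : IntervalIntegrable (fun x => h (a + b - x)) volume a b := by
    simpa using (hint.comp_sub_left (a + b)).symm
  have integral_refl : ∫ x in a..b, h (a + b - x) = ∫ x in a..b, h x := by
    simp only [integral_comp_sub_left, add_sub_cancel_right, add_sub_cancel_left]
  have hdouble : 2 * ((b - a) * h ((a + b) / 2)) ≤ 2 * ∫ x in a..b, h x :=
    calc
      2 * ((b - a) * h ((a + b) / 2)) = ∫ _ in a..b, 2 * h ((a + b) / 2) := by
        rw [intervalIntegral.integral_const, smul_eq_mul]
        ring
      _ ≤ ∫ x in a..b, (h x + h (a + b - x)) :=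
        integral_mono_on hab intervalIntegrable_const (hint.add hint_refl) fun _ hx =>
          two_mul_map_midpoint_le_of_convexOn hh hx
      _ = 2 * ∫ x in a..b, h x := by
        rw [intervalIntegral.integral_add hint hint_refl, integral_refl, two_mul]
  exact le_of_mul_le_mul_left hdouble two_pos

theorem sub_mul_map_midpoint_add_le_integral_of_convexOn (hh : ConvexOn ℝ (Set.Icc a b) h) {m : ℝ}
    (hm : m ∈ Set.Icc a b) :
    (m - a) * h ((a + m) / 2) + (b - m) * h ((m + b) / 2) ≤ ∫ x in a..b, h x := by
  have hleft : ConvexOn ℝ (Set.Icc a m) h :=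
    hh.subset (Set.Icc_subset_Icc_right hm.2) (convex_Icc a m)
  have hright : ConvexOn ℝ (Set.Icc m b) h :=
    hh.subset (Set.Icc_subset_Icc_left hm.1) (convex_Icc m b)
  rw [← integral_add_adjacent_intervals (intervalIntegrable_of_convexOn hm.1 hleft)
    (intervalIntegrable_of_convexOn hm.2 hright)]
  exact add_le_add (sub_mul_map_midpoint_le_integral_of_convexOn hm.1 hleft)
    (sub_mul_map_midpoint_le_integral_of_convexOn hm.2 hright)

theorem map_midpoint_le_splitMidpointMean (hab : a ≤ b) (hh : ConvexOn ℝ (Set.Icc a b) h) {l : ℝ}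
    (hl : l ∈ Set.Icc (0 : ℝ) 1) : h ((a + b) / 2) ≤ splitMidpointMean h a b l := by
  have h₀ : 0 ≤ l * (b - a) := mul_nonneg hl.1 (sub_nonneg.2 hab)
  have h₁ : 0 ≤ (1 - l) * (b - a) := mul_nonneg (sub_nonneg.2 hl.2) (sub_nonneg.2 hab)
  have hleft : (l * b + (2 - l) * a) / 2 ∈ Set.Icc a b := ⟨by linarith, by linarith⟩
  have hright : ((1 + l) * b + (1 - l) * a) / 2 ∈ Set.Icc a b := ⟨by linarith, by linarith⟩
  have hcomb : l • ((l * b + (2 - l) * a) / 2) + (1 - l) • (((1 + l) * b + (1 - l) * a) / 2) =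
      (a + b) / 2 := by
    simp only [smul_eq_mul]
    ring
  rw [← hcomb]
  exact hh.2 hleft hright hl.1 (sub_nonneg.2 hl.2) (add_sub_cancel l 1)

theorem splitMidpointMean_le_average (hab : a < b) (hh : ConvexOn ℝ (Set.Icc a b) h) {l : ℝ}
    (hl : l ∈ Set.Icc (0 : ℝ) 1) :
    splitMidpointMean h a b l ≤ 1 / (b - a) * ∫ x in a..b, h x := by
  obtain ⟨m, hm⟩ : ∃ m, m = l * b + (1 - l) * a := ⟨_, rfl⟩
  have hm_mem : m ∈ Set.Icc a b := by
    rw [hm]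
    exact convex_Icc a b (Set.right_mem_Icc.2 hab.le) (Set.left_mem_Icc.2 hab.le) hl.1
      (sub_nonneg.2 hl.2) (add_sub_cancel l 1)
  have hleft : (l * b + (2 - l) * a) / 2 = (a + m) / 2 := by rw [hm]; ring
  have hright : ((1 + l) * b + (1 - l) * a) / 2 = (m + b) / 2 := by rw [hm]; ring
  rw [splitMidpointMean, hleft, hright, one_div_mul_eq_div, le_div_iff₀ (sub_pos.2 hab)]
  calc
    (l * h ((a + m) / 2) + (1 - l) * h ((m + b) / 2)) * (b - a)
      = (m - a) * h ((a + m) / 2) + (b - m) * h ((m + b) / 2) := by rw [hm]; ring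
    _ ≤ ∫ x in a..b, h x := sub_mul_map_midpoint_add_le_integral_of_convexOn hh hm_mem

end ConvexOn

section PseudoOperations

variable {g ginv : ℝ → ℝ}

theorem map_padd (hri : Function.RightInverse ginv g) (x y : ℝ) :
    g (padd g ginv x y) = g x + g y :=
  hri _

theorem map_psmul (hri : Function.RightInverse ginv g) (l x : ℝ) :
    g (psmul g ginv l x) = l * g x :=
  hri _

theorem map_pint (hri : Function.RightInverse ginv g) (f : ℝ → ℝ) (a b : ℝ) :
    g (pint g ginv f a b) = ∫ x in a..b, g (f x) :=
  hri _

theorem pseudoConvexOn_iff_convexOn (hri : Function.RightInverse ginv g) {f : ℝ → ℝ} {a b : ℝ} :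
    PseudoConvexOn g ginv a b f ↔ ConvexOn ℝ (Set.Icc a b) fun x => g (f x) := by
  simp only [PseudoConvexOn, pleInc, map_padd hri, map_psmul hri]
  constructor
  · intro hf
    refine ⟨convex_Icc a b, fun x hx y hy s t hs ht hst => ?_⟩
    obtain rfl : t = 1 - s := eq_sub_of_add_eq' hst
    exact hf x hx y hy s ⟨hs, sub_nonneg.1 ht⟩
  · intro hf x hx y hy s hs
    exact hf.2 hx hy hs.1 (sub_nonneg.2 hs.2) (add_sub_cancel s 1)

theorem pseudo_hermite_hadamard_refined_lower_general (hri : Function.RightInverse ginv g)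
    {a b : ℝ} (hab : a < b) {f : ℝ → ℝ} (hconv : PseudoConvexOn g ginv a b f)
    {l : ℝ} (hl : l ∈ Set.Icc (0 : ℝ) 1) :
    pleInc g (f ((a + b) / 2))
      (padd g ginv (psmul g ginv l (f ((l * b + (2 - l) * a) / 2)))
        (psmul g ginv (1 - l) (f (((1 + l) * b + (1 - l) * a) / 2)))) ∧
      pleInc g
        (padd g ginv (psmul g ginv l (f ((l * b + (2 - l) * a) / 2)))
          (psmul g ginv (1 - l) (f (((1 + l) * b + (1 - l) * a) / 2))))
        (psmul g ginv (1 / (b - a)) (pint g ginv f a b)) := by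
  have hgf : ConvexOn ℝ (Set.Icc a b) fun x => g (f x) :=
    (pseudoConvexOn_iff_convexOn hri).1 hconv
  simp only [pleInc, map_padd hri, map_psmul hri, map_pint hri]
  exact ⟨map_midpoint_le_splitMidpointMean hab.le hgf hl,
    splitMidpointMean_le_average hab hgf hl⟩

end PseudoOperations

/-- Refined pseudo Hermite–Hadamard inequality, lower part:
`f((a+b)/2) ≤_g ℓ(λ) ≤_g (1/(b-a)) ⊙ ∫^⊕_{[a,b]} f` where
`ℓ(λ) = λ ⊙ f((λb+(2-λ)a)/2) ⊕ (1-λ) ⊙ f(((1+λ)b+(1-λ)a)/2)`. -/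
theorem pseudo_hermite_hadamard_refined_lower (g ginv : ℝ → ℝ)
    (hmono : StrictMono g) (hcont : Continuous g)
    (hli : Function.LeftInverse ginv g) (hri : Function.RightInverse ginv g)
    (a b : ℝ) (hab : a < b) (f : ℝ → ℝ)
    (hconv : PseudoConvexOn g ginv a b f)
    (hint : IntervalIntegrable (fun x => g (f x)) volume a b)
    (l : ℝ) (hl0 : 0 ≤ l) (hl1 : l ≤ 1) :
    pleInc g (f ((a + b) / 2))
      (padd g ginv (psmul g ginv l (f ((l * b + (2 - l) * a) / 2)))
        (psmul g ginv (1 - l) (f (((1 + l) * b + (1 - l) * a) / 2)))) ∧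
      pleInc g
        (padd g ginv (psmul g ginv l (f ((l * b + (2 - l) * a) / 2)))
          (psmul g ginv (1 - l) (f (((1 + l) * b + (1 - l) * a) / 2))))
        (psmul g ginv (1 / (b - a)) (pint g ginv f a b)) :=
  pseudo_hermite_hadamard_refined_lower_general hri hab hconv ⟨hl0, hl1⟩
end
end
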